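/- Let p = 2m+1 > 10 be a prime and let T be a tree with m+1 edges that has a leaf z such that the tree T − z (T with the leaf z and its incident edge deleted) has at least 2m/5 leaves. Then T decomposes K_{6m+5} \ e, the complete graph on 6m+5 vertices minus one edge e. -/

import Mathlib

/-- `H` decomposes `G`: `G` is the edge-disjoint union of isomorphic copies of `H`,
each copy being given by an injective homomorphism of `H` into `G`, and every edge of `G`
lying in exactly one copy. -/
def Decomposes {α β : Type} (H : SimpleGraph α) (G : SimpleGraph β) : Prop :=
  ∃ (ι : Type) (f : ι → α → β),
    (∀ i, Function.Injective (f i)) ∧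
    (∀ i a b, H.Adj a b → G.Adj (f i a) (f i b)) ∧
    (∀ e ∈ G.edgeSet, ∃! q : ι × Sym2 α, q.2 ∈ H.edgeSet ∧ Sym2.map (f q.1) q.2 = e)

/-!
Let `z` be the given leaf. The non-leaves of `T - z` receive distinct labels in `ZMod p` greedily,
so that the differences of the labels along darts are distinct; a Vandermonde determinant argument
then labels the leaves of `T - z`, again by distinct elements, so that all dart differences remain
distinct. Each label is thus used at most twice, and the conflicts between labels form the union
of a forest and a function graph, so the labels are properly 4-coloured.

The four colours are the four classes of linear forms on `(ZMod 3)²`. Translating the labels by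
`ZMod p`, and moving each vertex in its fibre `ZMod 3` by the form of its colour, gives `9p`
copies of `T - z` on `ZMod p × ZMod 3`: an edge determines its translation by its difference and
then the point of `(ZMod 3)²` by two independent coordinates. The edges at `z` use the pairs
within a fibre and those joining `ZMod p × ZMod 3` to two further points. Counting edges shows
that only the pair of these two points is left over.
-/

open Finset

section Sparse

variable {W : Type*} {G : SimpleGraph W}

theorem card_edgeFinset_lt_card_of_isAcyclic [Fintype W] [Nonempty W] [Fintype G.edgeSet]
    (hG : G.IsAcyclic) : #G.edgeFinset < Fintype.card W := by
  classical
  obtain ⟨T, hGT, -, hT⟩ :=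
    SimpleGraph.connected_top.exists_isTree_le_of_le_of_isAcyclic (le_top : G ≤ ⊤) hG
  calc #G.edgeFinset ≤ #T.edgeFinset := card_le_card (SimpleGraph.edgeFinset_mono hGT)
    _ < #T.edgeFinset + 1 := Nat.lt_succ_self _
    _ = Fintype.card W := hT.card_edgeFinset

theorem isAcyclic_map {X : Type*} (hG : G.IsAcyclic) (f : W ↪ X) : (G.map f).IsAcyclic := by
  intro x c hc
  have hrange : ∀ y ∈ c.support, y ∈ Set.range f := fun y hy => by
    obtain ⟨e, he, hye⟩ :=
      (SimpleGraph.Walk.mem_support_iff_exists_mem_edges_of_not_nil hc.not_nil).1 hy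
    have he' := c.edges_subset_edgeSet he
    rw [SimpleGraph.edgeSet_map] at he'
    obtain ⟨e₀, -, rfl⟩ := he'
    obtain ⟨w, -, rfl⟩ := Sym2.mem_map.1 hye
    exact ⟨w, rfl⟩
  let φ : G ≃g (G.map f).induce (Set.range f) :=
    { Equiv.ofInjective f f.injective with map_rel_iff' := by simp }
  refine φ.isAcyclic_iff.1 hG (c.induce _ hrange) ?_
  apply SimpleGraph.Walk.IsCycle.of_map (f := (SimpleGraph.Embedding.induce _).toHom)
  rwa [SimpleGraph.Walk.map_induce]

variable [DecidableRel G.Adj]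

theorem card_interedges_eq_sum (S : Finset W) :
    #(G.interedges S S) = ∑ v ∈ S, #{w ∈ S | G.Adj v w} := by
  rw [SimpleGraph.interedges_def, card_filter, sum_product]
  simp only [card_filter]

theorem card_interedges_self_add_two_le (hG : G.IsAcyclic) {S : Finset W} (hS : S.Nonempty) :
    #(G.interedges S S) + 2 ≤ 2 * #S := by
  classical
  have : Nonempty (S : Set W) := hS.to_subtype
  have hedges : #(G.induce (S : Set W)).edgeFinset < #S :=
    (card_edgeFinset_lt_card_of_isAcyclic (hG.induce S)).trans_eq (by simp)
  have hdarts : #(G.interedges S S) = Fintype.card (G.induce (S : Set W)).Dart := by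
    symm
    refine card_bij (fun d _ => (d.fst.1, d.snd.1)) ?_ ?_ ?_
    · exact fun d _ => (G.mk_mem_interedges_iff).2 ⟨d.fst.2, d.snd.2, d.adj⟩
    · exact fun d _ d' _ h => SimpleGraph.Dart.ext _ _ <|
        Prod.ext (Subtype.ext (congrArg Prod.fst h)) (Subtype.ext (congrArg Prod.snd h))
    · rintro ⟨u, v⟩ huv
      obtain ⟨hu, hv, hadj⟩ := (SimpleGraph.mk_mem_interedges_iff _).1 huv
      exact ⟨⟨(⟨u, hu⟩, ⟨v, hv⟩), hadj⟩, mem_univ _, rfl⟩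
  rw [hdarts, SimpleGraph.dart_card_eq_twice_card_edges]
  lia

theorem exists_card_adj_lt {k : ℕ} {S : Finset W} (hS : #(G.interedges S S) < k * #S) :
    ∃ v ∈ S, #{w ∈ S | G.Adj v w} < k := by
  apply exists_lt_of_sum_lt
  rwa [← card_interedges_eq_sum, sum_const, smul_eq_mul, mul_comm]

/-- Greedy colouring: every nonempty set has a vertex with fewer than `k` neighbours in it. -/
theorem colorable_of_forall_card_interedges_lt [Finite W] {k : ℕ}
    (hG : ∀ S : Finset W, S.Nonempty → #(G.interedges S S) < k * #S) : G.Colorable k := by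
  classical
  have := Fintype.ofFinite W
  cases isEmpty_or_nonempty W
  · exact .of_isEmpty k
  have : NeZero k := ⟨by rintro rfl; simpa using hG univ univ_nonempty⟩
  suffices ∀ n, ∀ S : Finset W, #S = n →
      ∃ col : W → Fin k, ∀ u ∈ S, ∀ v ∈ S, G.Adj u v → col u ≠ col v by
    obtain ⟨col, hcol⟩ := this _ univ rfl
    exact ⟨.mk col fun {u v} h => hcol u (mem_univ u) v (mem_univ v) h⟩
  intro n
  induction n with
  | zero => exact fun S hS => ⟨fun _ => 0, by simp [card_eq_zero.1 hS]⟩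
  | succ n ih =>
    intro S hS
    obtain ⟨v, hv, hdeg⟩ := exists_card_adj_lt (hG S (card_pos.1 (by lia)))
    obtain ⟨col, hcol⟩ := ih (S.erase v) (by rw [card_erase_of_mem hv]; lia)
    obtain ⟨c, -, hc⟩ : ∃ c ∈ univ, c ∉ {w ∈ S | G.Adj v w}.image col :=
      exists_mem_notMem_of_card_lt_card (card_image_le.trans_lt (by simpa using hdeg))
    have hcv : ∀ w ∈ S, G.Adj v w → c ≠ col w := fun w hw hvw h =>
      hc (mem_image.2 ⟨w, mem_filter.2 ⟨hw, hvw⟩, h.symm⟩)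
    refine ⟨Function.update col v c, fun x hx y hy hxy => ?_⟩
    by_cases hxv : x = v
    · subst hxv
      rw [Function.update_self, Function.update_of_ne hxy.ne']
      exact hcv y hy hxy
    by_cases hyv : y = v
    · subst hyv
      rw [Function.update_self, Function.update_of_ne hxy.ne]
      exact (hcv x hx hxy.symm).symm
    rw [Function.update_of_ne hxv, Function.update_of_ne hyv]
    exact hcol x (mem_erase.2 ⟨hxv, hx⟩) y (mem_erase.2 ⟨hyv, hy⟩) hxy

end Sparse

theorem colorable_four_sup_fromRel {W : Type*} [Finite W] {G : SimpleGraph W} (hG : G.IsAcyclic)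
    (h : W → W) : (G ⊔ SimpleGraph.fromRel fun u v => h u = v).Colorable 4 := by
  classical
  refine colorable_of_forall_card_interedges_lt fun S hS => ?_
  have hsub : (G ⊔ SimpleGraph.fromRel fun u v => h u = v).interedges S S ⊆
      G.interedges S S ∪ S.image (fun v => (v, h v)) ∪ S.image (fun v => (h v, v)) := by
    rintro ⟨u, v⟩ huv
    obtain ⟨hu, hv, hadj⟩ := (SimpleGraph.mk_mem_interedges_iff _).1 huv
    simp only [mem_union, SimpleGraph.mk_mem_interedges_iff, mem_image, Prod.mk.injEq]
    rcases hadj with hadj | ⟨-, huv | hvu⟩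
    · exact .inl (.inl ⟨hu, hv, hadj⟩)
    · exact .inl (.inr ⟨u, hu, rfl, huv⟩)
    · exact .inr ⟨v, hv, hvu, rfl⟩
  calc _ ≤ #(G.interedges S S) + #S + #S := (card_le_card hsub).trans <|
        (card_union_le _ _).trans <| add_le_add ((card_union_le _ _).trans <|
          add_le_add_right card_image_le _) card_image_le
    _ < 4 * #S := by
        have := card_interedges_self_add_two_le hG hS
        lia

section Differences

variable {W A : Type*} [AddCommGroup A]

/-- The difference of the labels `f` along a dart, given as the ordered pair of its ends; a
labelling of a graph is *rainbow* if this is injective on the darts. -/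
def dartDiff (f : W → A) (d : W × W) : A :=
  f d.1 - f d.2

theorem dartDiff_swap (f : W → A) (d : W × W) : dartDiff f d.swap = -dartDiff f d :=
  (neg_sub _ _).symm

theorem injOn_dartDiff_union_swap {f : W → A} {I E : Set (W × W)} (hI : Set.InjOn (dartDiff f) I)
    (hIswap : ∀ d ∈ I, d.swap ∈ I) (hE : Set.InjOn (dartDiff f) E)
    (hEI : ∀ d ∈ E, ∀ d' ∈ I, dartDiff f d ≠ dartDiff f d')
    (hEE : ∀ d ∈ E, ∀ d' ∈ E, dartDiff f d ≠ -dartDiff f d') :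
    Set.InjOn (dartDiff f) (I ∪ E ∪ Prod.swap ⁻¹' E) := by
  have hswap : ∀ {d d'}, dartDiff f d = dartDiff f d' → dartDiff f d.swap = dartDiff f d'.swap :=
    fun h => by rw [dartDiff_swap, dartDiff_swap, h]
  rintro d ((hd | hd) | hd) d' ((hd' | hd') | hd') h
  · exact hI hd hd' h
  · exact (hEI d' hd' d hd h.symm).elim
  · exact (hEI _ hd' _ (hIswap d hd) (hswap h.symm)).elim
  · exact (hEI d hd d' hd' h).elim
  · exact hE hd hd' h
  · exact (hEE d hd _ hd' (by rw [dartDiff_swap, neg_neg, h])).elim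
  · exact (hEI _ hd _ (hIswap d' hd') (hswap h)).elim
  · exact (hEE d' hd' _ hd (by rw [dartDiff_swap, neg_neg, h])).elim
  · exact Prod.swap_injective (hE hd hd' (hswap h))

variable [Fintype A]

theorem eq_zero_of_eq_neg_of_odd_card (hA : Odd (Fintype.card A)) {x : A} (hx : x = -x) :
    x = 0 := by
  have hcop : (Nat.card A).Coprime 2 := by
    rwa [Nat.card_eq_fintype_card, Nat.coprime_two_right]
  refine hcop.nsmul_right_bijective.1 (?_ : 2 • x = 2 • 0)
  rw [smul_zero, two_nsmul, ← eq_neg_iff_add_eq_zero]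
  exact hx

theorem exists_card_eq_forall_ne_neg (hA : Odd (Fintype.card A)) (D : Finset A) {n : ℕ}
    (hn : #D + 2 * n < Fintype.card A) :
    ∃ B : Finset A, #B = n ∧ (∀ x ∈ B, x ∉ D) ∧ ∀ x ∈ B, ∀ y ∈ B, x ≠ -y := by
  classical
  induction n with
  | zero => exact ⟨∅, by simp⟩
  | succ n ih =>
    obtain ⟨B, hB, hBD, hBneg⟩ := ih (by lia)
    obtain ⟨x, -, hx⟩ : ∃ x ∈ univ, x ∉ insert 0 (D ∪ B ∪ B.image Neg.neg) := by
      refine exists_mem_notMem_of_card_lt_card ?_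
      have h₁ := card_insert_le 0 (D ∪ B ∪ B.image Neg.neg)
      have h₂ := card_union_le (D ∪ B) (B.image Neg.neg)
      have h₃ := card_union_le D B
      have h₄ : #(B.image Neg.neg) ≤ #B := card_image_le
      rw [card_univ]
      lia
    simp only [mem_insert, mem_union, mem_image, not_or, not_exists, not_and] at hx
    obtain ⟨hx0, ⟨hxD, hxB⟩, hxneg⟩ := hx
    refine ⟨insert x B, by rw [card_insert_of_notMem hxB, hB], ?_, ?_⟩
    · exact forall_mem_insert _ _ _ |>.2 ⟨hxD, hBD⟩
    · simp only [forall_mem_insert]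
      exact ⟨⟨fun h => hx0 (eq_zero_of_eq_neg_of_odd_card hA h), fun y hy h => hxneg y hy h.symm⟩,
        fun y hy => ⟨fun h => hxneg y hy (by rw [h, neg_neg]), hBneg y hy⟩⟩

variable {G : SimpleGraph W} [DecidableRel G.Adj]

theorem injOn_dartDiff_update [DecidableEq W] (hA : Odd (Fintype.card A)) {f : W → A}
    {S : Finset W} {v w : W} {x : A} (hv : v ∉ S) (hw : ∀ u ∈ S, G.Adj v u → u = w)
    (hxS : ∀ u ∈ S, f u ≠ x) (hxI : ∀ d ∈ G.interedges S S, f w + dartDiff f d ≠ x)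
    (hdiff : Set.InjOn (dartDiff f) (G.interedges S S)) :
    Set.InjOn (dartDiff (Function.update f v x))
      (G.interedges (insert v S) (insert v S)) := by
  have hgS : Set.EqOn (Function.update f v x) f S := fun u hu =>
    Function.update_of_ne (ne_of_mem_of_not_mem hu hv) ..
  have hgI : Set.EqOn (dartDiff (Function.update f v x)) (dartDiff f) (G.interedges S S) := by
    intro d hd
    obtain ⟨h₁, h₂, -⟩ := G.mem_interedges_iff.1 hd
    rw [dartDiff, dartDiff, hgS h₁, hgS h₂]
  let E : Set (W × W) := {d | d.1 = v ∧ d.2 ∈ S ∧ G.Adj v d.2}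
  have hEeq : ∀ d ∈ E, d = (v, w) := fun d hd => Prod.ext hd.1 (hw d.2 hd.2.1 hd.2.2)
  have hE : ∀ d ∈ E, w ∈ S ∧ dartDiff (Function.update f v x) d = x - f w := by
    intro d hd
    have hwS : w ∈ S := by simpa [hEeq d hd] using hd.2.1
    rw [hEeq d hd, dartDiff, Function.update_self, hgS hwS]
    exact ⟨hwS, rfl⟩
  refine (injOn_dartDiff_union_swap (E := E) (hdiff.congr hgI.symm) ?_ ?_ ?_ ?_).mono ?_
  · exact fun d hd => G.swap_mem_interedges_iff.2 hd
  · exact fun d hd d' hd' _ => (hEeq d hd).trans (hEeq d' hd').symm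
  · intro d hd d' hd' h
    rw [(hE d hd).2, hgI hd'] at h
    exact hxI d' hd' (by rw [← h, add_sub_cancel])
  · intro d hd d' hd' h
    rw [(hE d hd).2, (hE d' hd').2] at h
    exact hxS w (hE d hd).1 (sub_eq_zero.1 (eq_zero_of_eq_neg_of_odd_card hA h)).symm
  · rintro ⟨a, b⟩ hab
    obtain ⟨ha, hb, hadj⟩ := (G.mk_mem_interedges_iff).1 hab
    rcases mem_insert.1 ha with rfl | ha' <;> rcases mem_insert.1 hb with rfl | hb'
    · exact (G.irrefl hadj).elim
    · exact .inl (.inr ⟨rfl, hb', hadj⟩)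
    · exact .inr ⟨rfl, ha', hadj.symm⟩
    · exact .inl (.inl ((G.mk_mem_interedges_iff).2 ⟨ha', hb', hadj⟩))

theorem exists_injOn_dartDiff_insert [DecidableEq W] (hA : Odd (Fintype.card A)) {f : W → A}
    {S : Finset W} {v : W}
    (hv : v ∉ S) (hdeg : #{w ∈ S | G.Adj v w} < 2)
    (hcard : #S + #(G.interedges S S) < Fintype.card A)
    (hf : Set.InjOn f S) (hdiff : Set.InjOn (dartDiff f) (G.interedges S S)) :
    ∃ g : W → A, Set.InjOn g (insert v S : Finset W) ∧
      Set.InjOn (dartDiff g) (G.interedges (insert v S) (insert v S)) := by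
  classical
  obtain ⟨w, hw⟩ : ∃ w, ∀ u ∈ S, G.Adj v u → u = w := by
    have : Nonempty W := ⟨v⟩
    obtain ⟨w, hw⟩ := card_le_one_iff_subset_singleton.1 (Nat.le_of_lt_succ hdeg)
    exact ⟨w, fun u hu hvu => mem_singleton.1 (hw (mem_filter.2 ⟨hu, hvu⟩))⟩
  obtain ⟨x, -, hx⟩ : ∃ x ∈ univ,
      x ∉ S.image f ∪ (G.interedges S S).image fun d => f w + dartDiff f d :=
    exists_mem_notMem_of_card_lt_card <| (card_union_le _ _).trans_lt <|
      (add_le_add card_image_le card_image_le).trans_lt hcard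
  simp only [mem_union, mem_image, not_or, not_exists, not_and] at hx
  obtain ⟨hxS, hxI⟩ := hx
  have hgS : Set.EqOn (Function.update f v x) f S := fun u hu =>
    Function.update_of_ne (ne_of_mem_of_not_mem hu hv) ..
  refine ⟨Function.update f v x, ?_, injOn_dartDiff_update hA hv hw hxS hxI hdiff⟩
  rw [coe_insert, Set.injOn_insert hv, Function.update_self, hgS.image_eq]
  exact ⟨hf.congr hgS.symm, fun ⟨u, hu, h⟩ => hxS u hu h⟩

theorem exists_injOn_dartDiff_of_isAcyclic (hA : Odd (Fintype.card A)) (hG : G.IsAcyclic)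
    {S : Finset W} (hS : 3 * #S ≤ Fintype.card A + 3) :
    ∃ f : W → A, Set.InjOn f S ∧ Set.InjOn (dartDiff f) (G.interedges S S) := by
  classical
  induction hn : #S generalizing S with
  | zero => exact ⟨fun _ => 0, by simp [card_eq_zero.1 hn]⟩
  | succ n ih =>
    have hSne : S.Nonempty := card_pos.1 (by lia)
    obtain ⟨v, hv, hdeg⟩ := exists_card_adj_lt (G := G) (k := 2) (S := S) <| by
      have := card_interedges_self_add_two_le hG hSne
      lia
    have hcard : #(S.erase v) = n := by rw [card_erase_of_mem hv]; lia
    obtain ⟨f, hf, hdiff⟩ := ih (S := S.erase v) (by lia) hcard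
    have hbound : #(S.erase v) + #(G.interedges (S.erase v) (S.erase v)) < Fintype.card A := by
      rcases (S.erase v).eq_empty_or_nonempty with hempty | hne
      · simp [hempty, Fintype.card_pos]
      · have := card_interedges_self_add_two_le hG hne
        lia
    have hdeg' : #{w ∈ S.erase v | G.Adj v w} < 2 :=
      (card_le_card (filter_subset_filter _ (erase_subset v S))).trans_lt hdeg
    have := exists_injOn_dartDiff_insert hA (notMem_erase v S) hdeg' hbound hf hdiff
    rwa [insert_erase hv] at this

end Differences

theorem sum_sign_mul_det_vandermonde_add_perm {R : Type*} [CommRing R] {n : ℕ} (a b : Fin n → R) :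
    ∑ σ : Equiv.Perm (Fin n), ((σ.sign : ℤ) : R) *
      (Matrix.vandermonde fun i => a i + b (σ i)).det =
        n.factorial * (Matrix.vandermonde b).det := by
  nontriviality R
  have hrow : ∀ τ : Equiv.Perm (Fin n),
      ∑ σ : Equiv.Perm (Fin n), (σ.sign : ℤ) * ∏ i, (a i + b (σ i)) ^ (τ i : ℕ) =
        (τ.sign : ℤ) * (Matrix.vandermonde b).det := fun τ => by
    have hpoly := Matrix.det_eval_matrixOfPolynomials_eq_det_vandermonde b
      (fun j => (Polynomial.X + Polynomial.C (a (τ.symm j))) ^ (j : ℕ))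
      (fun j => by rw [(Polynomial.monic_X_add_C _).natDegree_pow, Polynomial.natDegree_X_add_C,
        mul_one]) (fun j => (Polynomial.monic_X_add_C _).pow _)
    rw [hpoly, ← Matrix.det_permute' τ, Matrix.det_apply']
    refine sum_congr rfl fun σ _ => ?_
    simp [add_comm]
  calc _ = ∑ τ : Equiv.Perm (Fin n), ((τ.sign : ℤ) : R) *
        ∑ σ : Equiv.Perm (Fin n), (σ.sign : ℤ) * ∏ i, (a i + b (σ i)) ^ (τ i : ℕ) := by
        simp_rw [← Matrix.det_transpose (Matrix.vandermonde fun _ => _), Matrix.det_apply',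
          mul_sum]
        rw [sum_comm]
        refine sum_congr rfl fun τ _ => sum_congr rfl fun σ _ => ?_
        simp [Matrix.vandermonde_apply, mul_left_comm]
    _ = _ := by
        simp_rw [hrow, ← mul_assoc, ← Int.cast_mul, Int.units_coe_mul_self]
        simp [Fintype.card_perm]

theorem exists_injective_add {K ι : Type*} [CommRing K] [IsDomain K] [Fintype ι]
    (hι : ((Fintype.card ι).factorial : K) ≠ 0) (a : ι → K) {B : Finset K}
    (hB : Fintype.card ι ≤ #B) :
    ∃ b : ι → K, (∀ i, b i ∈ B) ∧ Function.Injective b ∧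
      Function.Injective fun i => a i + b i := by
  obtain ⟨C, hCB, hC⟩ := exists_subset_card_eq hB
  let e := Fintype.equivFin ι
  let c := C.equivFinOfCardEq hC
  have hc : Function.Injective fun j => (c.symm j : K) :=
    Subtype.val_injective.comp c.symm.injective
  -- The Vandermonde determinants have a nonzero alternating sum over `σ`, so one is nonzero.
  obtain ⟨σ, hσ⟩ : ∃ σ : Equiv.Perm (Fin (Fintype.card ι)),
      Function.Injective fun j => a (e.symm j) + c.symm (σ j) := by
    by_contra! hσ
    have hzero : ∀ σ : Equiv.Perm (Fin (Fintype.card ι)),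
        (Matrix.vandermonde fun j => a (e.symm j) + c.symm (σ j)).det = 0 := fun σ =>
      by_contra fun h => hσ σ (Matrix.det_vandermonde_ne_zero_iff.1 h)
    refine mul_ne_zero hι (Matrix.det_vandermonde_ne_zero_iff.2 hc) ?_
    rw [← sum_sign_mul_det_vandermonde_add_perm fun j => a (e.symm j)]
    exact sum_eq_zero fun σ _ => by rw [hzero, mul_zero]
  refine ⟨fun i => c.symm (σ (e i)), fun i => hCB (c.symm _).2, ?_, ?_⟩
  · exact hc.comp (σ.injective.comp e.injective)
  · simpa [Function.comp_def] using hσ.comp e.injective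

section Core

variable {W : Type*} {G : SimpleGraph W} {S : Finset W} {par : W → W}

theorem eq_or_eq_of_forall_adj_eq (hG : G.Preconnected) {u v : W} (hu : ∀ x, G.Adj u x → x = v)
    (hv : ∀ x, G.Adj v x → x = u) (w : W) : w = u ∨ w = v := by
  induction (SimpleGraph.reachable_iff_reflTransGen u w).1 (hG u w) with
  | refl => exact .inl rfl
  | tail _ hadj ih =>
    rcases ih with rfl | rfl
    exacts [.inr (hu _ hadj), .inl (hv _ hadj)]

/-- `S` is a *core* of `G` with attaching map `par` if every vertex `v` outside `S` is a leaf of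
`G` whose only neighbour `par v` lies in `S`; the values of `par` on `S` are irrelevant. -/
def IsCore (G : SimpleGraph W) (S : Finset W) (par : W → W) : Prop :=
  ∀ v ∉ S, par v ∈ S ∧ ∀ x, G.Adj v x ↔ x = par v

theorem IsCore.nonempty [Nonempty W] (h : IsCore G S par) : S.Nonempty := by
  obtain ⟨v⟩ := ‹Nonempty W›
  by_cases hv : v ∈ S
  exacts [⟨v, hv⟩, ⟨par v, (h v hv).1⟩]

theorem exists_isCore [Fintype W] (hG : G.Preconnected) :
    ∃ S par, IsCore G S par ∧
      (#S = 1 ∨ #S + {v | (G.neighborSet v).ncard = 1}.ncard = Fintype.card W) := by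
  classical
  let leaf : W → Prop := fun v => (G.neighborSet v).ncard = 1
  have hpar : ∀ v, ∃ w, leaf v → ∀ x, G.Adj v x ↔ x = w := fun v => by
    by_cases h : leaf v
    · obtain ⟨w, hw⟩ := Set.ncard_eq_one.1 h
      exact ⟨w, fun _ x => by rw [← SimpleGraph.mem_neighborSet, hw, Set.mem_singleton_iff]⟩
    · exact ⟨v, fun h' => (h h').elim⟩
  choose par hpar using hpar
  -- Two adjacent leaves exhaust `G`; otherwise the non-leaves form a core.
  by_cases hadj : ∃ v, leaf v ∧ leaf (par v)
  · obtain ⟨v, hv, hpv⟩ := hadj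
    have hback : par (par v) = v := ((hpar _ hpv v).1 ((hpar v hv _).2 rfl).symm).symm
    have hall : ∀ w, w = v ∨ w = par v := eq_or_eq_of_forall_adj_eq hG
      (fun x => (hpar v hv x).1) (fun x hx => ((hpar _ hpv x).1 hx).trans hback)
    refine ⟨{v}, par, fun w hw => ?_, .inl (card_singleton v)⟩
    rw [(hall w).resolve_left (mt mem_singleton.2 hw)]
    exact ⟨mem_singleton.2 hback, hpar _ hpv⟩
  · refine ⟨({v | leaf v} : Finset W)ᶜ, par, fun v hv => ?_, .inr ?_⟩
    · have hv' : leaf v := by simpa using hv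
      exact ⟨by simpa using fun h => hadj ⟨v, hv', h⟩, hpar v hv'⟩
    · rw [← coe_filter_univ, Set.ncard_coe_finset, card_compl_add_card]

theorem IsCore.injOn_dartDiff {A : Type*} [AddCommGroup A] [DecidableRel G.Adj]
    (h : IsCore G S par) {f : W → A} (hI : Set.InjOn (dartDiff f) (G.interedges S S))
    (hinj : Set.InjOn (fun v => f v - f (par v)) (S : Set W)ᶜ)
    (hne : ∀ v ∉ S, ∀ d ∈ G.interedges S S, f v - f (par v) ≠ dartDiff f d)
    (hneg : ∀ u ∉ S, ∀ v ∉ S, f u - f (par u) ≠ -(f v - f (par v))) :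
    Set.InjOn (dartDiff f) {d | G.Adj d.1 d.2} := by
  let E : Set (W × W) := (fun v => (v, par v)) '' (S : Set W)ᶜ
  refine (injOn_dartDiff_union_swap (E := E) hI ?_ ?_ ?_ ?_).mono ?_
  · exact fun d hd => G.swap_mem_interedges_iff.2 hd
  · rintro _ ⟨u, hu, rfl⟩ _ ⟨v, hv, rfl⟩ heq
    rw [hinj hu hv heq]
  · rintro _ ⟨v, hv, rfl⟩
    exact hne v hv
  · rintro _ ⟨u, hu, rfl⟩ _ ⟨v, hv, rfl⟩
    exact hneg u hu v hv
  · have hE : ∀ u v, G.Adj u v → u ∉ S → (u, v) ∈ E := fun u v huv hu =>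
      ⟨u, hu, by rw [((h u hu).2 v).1 huv]⟩
    rintro ⟨u, v⟩ huv
    by_cases hu : u ∈ S
    · by_cases hv : v ∈ S
      · exact .inl (.inl (G.mk_mem_interedges_iff.2 ⟨hu, hv, huv⟩))
      · exact .inr (hE v u huv.symm hv)
    · exact .inl (.inr (hE u v huv hu))

theorem IsCore.exists_injOn_dartDiff {K : Type*} [CommRing K] [IsDomain K] [Fintype K] [Fintype W]
    [DecidableEq W] [DecidableRel G.Adj] (h : IsCore G S par) (hK : Odd (Fintype.card K))
    (hfac : ((#Sᶜ).factorial : K) ≠ 0)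
    (hcard : #(G.interedges S S) + 2 * #Sᶜ < Fintype.card K) {f₀ : W → K}
    (hf₀ : Set.InjOn (dartDiff f₀) (G.interedges S S)) :
    ∃ f : W → K, Set.EqOn f f₀ S ∧ Set.InjOn f (S : Set W)ᶜ ∧
      Set.InjOn (dartDiff f) {d | G.Adj d.1 d.2} := by
  classical
  have hcompl : Fintype.card {v // v ∉ S} = #Sᶜ := by simp [card_compl]
  obtain ⟨B, hB, hBD, hBneg⟩ := exists_card_eq_forall_ne_neg hK
    ((G.interedges S S).image (dartDiff f₀))
    (lt_of_le_of_lt (Nat.add_le_add_right card_image_le _) hcard)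
  obtain ⟨b, hbB, hbinj, haddinj⟩ := exists_injective_add (K := K)
    (hcompl.symm ▸ hfac) (fun v : {v // v ∉ S} => f₀ (par v)) (hcompl.trans hB.symm).le
  let f : W → K := fun v => if hv : v ∈ S then f₀ v else f₀ (par v) + b ⟨v, hv⟩
  have hfS : Set.EqOn f f₀ S := fun v hv => dif_pos hv
  have hfC : ∀ v (hv : v ∉ S), f v = f₀ (par v) + b ⟨v, hv⟩ := fun v hv => dif_neg hv
  have hfI : Set.EqOn (dartDiff f) (dartDiff f₀) (G.interedges S S) := fun d hd => by
    obtain ⟨h₁, h₂, -⟩ := G.mem_interedges_iff.1 hd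
    rw [dartDiff, dartDiff, hfS h₁, hfS h₂]
  have hfb : ∀ v (hv : v ∉ S), f v - f (par v) = b ⟨v, hv⟩ := fun v hv => by
    rw [hfC v hv, hfS (h v hv).1, add_sub_cancel_left]
  refine ⟨f, hfS, fun u hu v hv huv => ?_, h.injOn_dartDiff (hf₀.congr hfI.symm) ?_ ?_ ?_⟩
  · rw [hfC u hu, hfC v hv] at huv
    exact congrArg Subtype.val (@haddinj ⟨u, hu⟩ ⟨v, hv⟩ huv)
  · intro u hu v hv huv
    exact congrArg Subtype.val (hbinj (by simpa only [hfb u hu, hfb v hv] using huv))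
  · intro v hv d hd heq
    rw [hfb v hv, hfI hd] at heq
    exact hBD _ (hbB ⟨v, hv⟩) (heq ▸ mem_image_of_mem _ hd)
  · intro u hu v hv
    rw [hfb u hu, hfb v hv]
    exact hBneg _ (hbB _) _ (hbB _)

theorem IsCore.exists_coloring {A : Type*} [Finite A] (h : IsCore G S par) (hG : G.IsAcyclic)
    {f : W → A} (hS : Set.InjOn f S) (hSc : Set.InjOn f (S : Set W)ᶜ)
    (hf : ∀ u v, G.Adj u v → f u ≠ f v) :
    ∃ col : A → Fin 4, ∀ u v, G.Adj u v → col (f u) ≠ col (f v) := by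
  -- Conflicts between labels of core vertices form a forest, and each label of a leaf conflicts
  -- with one further label, its image under `attach`.
  let g : (S : Set W) ↪ A := ⟨fun v => f v, hS.injective⟩
  let attach : A → A :=
    Function.extend (fun v : ((S : Set W)ᶜ : Set W) => f v) (fun v => f (par v)) id
  have hattach : ∀ v ∉ S, attach (f v) = f (par v) := fun v hv =>
    hSc.injective.extend_apply _ _ (⟨v, hv⟩ : ((S : Set W)ᶜ : Set W))
  obtain ⟨col⟩ := colorable_four_sup_fromRel (isAcyclic_map (hG.induce (S : Set W)) g) attach
  have hleaf : ∀ v ∉ S, ∀ x, G.Adj v x → col (f v) ≠ col (f x) := fun v hv x hvx =>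
    col.valid <| .inr <| (SimpleGraph.fromRel_adj _ _ _).2
      ⟨hf v x hvx, .inl (by rw [hattach v hv, ((h v hv).2 x).1 hvx])⟩
  refine ⟨col, fun u v huv => ?_⟩
  by_cases hu : u ∈ S <;> by_cases hv : v ∈ S
  · exact col.valid (.inl ⟨hf u v huv, ⟨u, hu⟩, ⟨v, hv⟩, huv, rfl, rfl⟩)
  · exact (hleaf v hv u huv.symm).symm
  · exact hleaf u hu v huv
  · exact hleaf u hu v huv

/-- A labelling of the vertices of `G` by an abelian group `A` that is rainbow, together with a
sorting of the vertices into levels `0` and `1` that separates vertices with the same label, and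
a colouring of the *labels* that is proper along the edges of `G`. -/
structure SplitLabelling (G : SimpleGraph W) (A : Type*) [AddCommGroup A] where
  label : W → A
  level : W → ZMod 3
  colour : A → Fin 4
  level_ne_two : ∀ v, level v ≠ 2
  injective : Function.Injective fun v => (label v, level v)
  rainbow : Set.InjOn (dartDiff label) {d | G.Adj d.1 d.2}
  colour_ne : ∀ u v, G.Adj u v → colour (label u) ≠ colour (label v)

theorem IsCore.exists_splitLabelling {m : ℕ} [Fintype W] (h : IsCore G S par)
    (hp : (2 * m + 1).Prime) (hG : G.IsAcyclic) (hcard : Fintype.card W = m + 1)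
    (hS : 3 * #S ≤ 2 * m + 4) : Nonempty (SplitLabelling G (ZMod (2 * m + 1))) := by
  classical
  have := Fact.mk hp
  have hodd : Odd (Fintype.card (ZMod (2 * m + 1))) := by
    rw [ZMod.card]; exact odd_two_mul_add_one m
  have hSc : #S + #Sᶜ = m + 1 := by rw [card_add_card_compl, hcard]
  have : Nonempty W := Fintype.card_pos_iff.1 (by lia)
  have hSne : S.Nonempty := h.nonempty
  have hinter := card_interedges_self_add_two_le hG hSne
  obtain ⟨f₀, hinj₀, hrain₀⟩ := exists_injOn_dartDiff_of_isAcyclic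
    (A := ZMod (2 * m + 1)) hodd hG (S := S) (by rw [ZMod.card]; lia)
  have hfac : ((#Sᶜ).factorial : ZMod (2 * m + 1)) ≠ 0 := by
    rw [Ne, ZMod.natCast_eq_zero_iff, hp.dvd_factorial]
    have := hSne.card_pos
    lia
  obtain ⟨f, hfS, hfC, hrain⟩ :=
    h.exists_injOn_dartDiff hodd hfac (by rw [ZMod.card]; lia) hrain₀
  have hfS' : Set.InjOn f S := hinj₀.congr hfS.symm
  have hne : ∀ u v, G.Adj u v → f u ≠ f v := fun u v huv heq =>
    huv.ne (congrArg Prod.fst (hrain (x₁ := (u, v)) (x₂ := (v, u)) huv huv.symm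
      (by rw [dartDiff, dartDiff, heq])))
  obtain ⟨col, hcol⟩ := h.exists_coloring hG hfS' hfC hne
  refine ⟨⟨f, fun v => if v ∈ S then 0 else 1, col, fun v => ?_, fun u v huv => ?_, hrain, hcol⟩⟩
  · split_ifs <;> decide
  · obtain ⟨hlabel, hlevel⟩ := Prod.ext_iff.1 huv
    by_cases hu : u ∈ S <;> by_cases hv : v ∈ S
    · exact hfS' hu hv hlabel
    · simp [hu, hv] at hlevel
    · simp [hu, hv] at hlevel
    · exact hfC hu hv hlabel

theorem exists_splitLabelling {m : ℕ} [Fintype W] (hp : (2 * m + 1).Prime) (hG : G.IsTree)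
    (hcard : Fintype.card W = m + 1)
    (hleaves : m ≤ 3 * {v | (G.neighborSet v).ncard = 1}.ncard + 1) :
    Nonempty (SplitLabelling G (ZMod (2 * m + 1))) := by
  obtain ⟨S, par, h, hS⟩ := exists_isCore hG.connected.preconnected
  exact h.exists_splitLabelling hp hG.isAcyclic hcard (by lia)

end Core

section Decomposition

theorem Decomposes.of_injective_of_card {α β ι : Type} [Finite ι] [Finite α] [Finite β]
    {H : SimpleGraph α} {G : SimpleGraph β} {f : ι → α → β} (hf : ∀ i, Function.Injective (f i))
    (hadj : ∀ i a b, H.Adj a b → G.Adj (f i a) (f i b))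
    (hedge : Function.Injective fun q : ι × H.edgeSet => Sym2.map (f q.1) q.2)
    (hcard : G.edgeSet.ncard = Nat.card ι * H.edgeSet.ncard) : Decomposes H G := by
  refine ⟨ι, f, hf, hadj, fun e he => ?_⟩
  let F : ι × H.edgeSet → G.edgeSet := fun q =>
    SimpleGraph.Hom.mapEdgeSet ⟨f q.1, hadj q.1 _ _⟩ q.2
  have hF : Function.Bijective F := by
    rw [Nat.bijective_iff_injective_and_card, Nat.card_prod, Nat.card_coe_set_eq,
      Nat.card_coe_set_eq, hcard]
    exact ⟨fun q q' h => hedge (congrArg Subtype.val h), rfl⟩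
  obtain ⟨⟨i, e₀⟩, hq⟩ := hF.2 ⟨e, he⟩
  refine ⟨(i, e₀), ⟨e₀.2, congrArg Subtype.val hq⟩, ?_⟩
  rintro ⟨j, e'⟩ ⟨he', heq⟩
  obtain ⟨rfl, rfl⟩ := Prod.ext_iff.1 <|
    @hF.1 (j, ⟨e', he'⟩) (i, e₀) (hq ▸ Subtype.ext heq)
  rfl

theorem injective_sym2Map_of_forall_adj {α β ι : Type*} {H : SimpleGraph α} {f : ι → α → β}
    (h : ∀ i j u v u' v', H.Adj u v → H.Adj u' v' → f i u = f j u' → f i v = f j v' →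
      i = j ∧ u = u' ∧ v = v') :
    Function.Injective fun q : ι × H.edgeSet => Sym2.map (f q.1) q.2 := by
  rintro ⟨i, ⟨u, v⟩, huv⟩ ⟨j, ⟨u', v'⟩, huv'⟩ heq
  rcases Sym2.eq_iff.1 heq with ⟨hu, hv⟩ | ⟨hu, hv⟩
  · obtain ⟨rfl, rfl, rfl⟩ := h i j u v u' v' huv huv' hu hv
    rfl
  · obtain ⟨rfl, rfl, rfl⟩ := h i j u v v' u' huv huv'.symm hu hv
    exact Prod.ext rfl (Subtype.ext Sym2.eq_swap)

theorem ncard_edgeSet_top_deleteEdges {X : Type*} [Finite X] {a b : X} (hab : a ≠ b) :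
    ((⊤ : SimpleGraph X).deleteEdges {s(a, b)}).edgeSet.ncard + 1 = (Nat.card X).choose 2 := by
  classical
  have := Fintype.ofFinite X
  rw [SimpleGraph.edgeSet_deleteEdges, Set.ncard_sdiff_singleton_add_one (by simpa using hab)
    (Set.toFinite _), ← SimpleGraph.coe_edgeFinset, Set.ncard_coe_finset,
    SimpleGraph.card_edgeFinset_top_eq_card_choose_two, Nat.card_eq_fintype_card]

theorem exists_equiv_apply_eq_apply_eq {X Y : Type*} (e : X ≃ Y) {x x' : X} (hx : x ≠ x')
    {y y' : Y} (hy : y ≠ y') : ∃ φ : X ≃ Y, φ x = y ∧ φ x' = y' := by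
  obtain ⟨σ, h, h'⟩ := MulAction.is_two_pretransitive_iff.1
    (Equiv.Perm.isMultiplyPretransitive Y 2) (e.injective.ne hx) hy
  exact ⟨e.trans σ, h, h'⟩

variable {V : Type*} {T : SimpleGraph V} {z y : V}

theorem mem_edgeSet_iff_of_neighborSet_eq (hz : T.neighborSet z = {y}) {e : Sym2 V} :
    e ∈ T.edgeSet ↔ e = s(z, y) ∨
      ∃ e' ∈ (T.induce {w | w ≠ z}).edgeSet, Sym2.map Subtype.val e' = e := by
  have hz' : ∀ x, T.Adj z x ↔ x = y := fun x => by
    rw [← SimpleGraph.mem_neighborSet, hz, Set.mem_singleton_iff]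
  constructor
  · obtain ⟨u, v⟩ := e
    intro huv
    by_cases hu : u = z
    · subst hu
      exact .inl (by rw [(hz' v).1 huv])
    by_cases hv : v = z
    · subst hv
      exact .inl (by rw [(hz' u).1 huv.symm]; exact Sym2.eq_swap)
    · exact .inr ⟨s(⟨u, hu⟩, ⟨v, hv⟩), huv, rfl⟩
  · rintro (rfl | ⟨⟨u, v⟩, huv, rfl⟩)
    exacts [(hz' y).2 rfl, huv]

theorem injective_sym2Map_of_neighborSet_eq {ι X : Type*} (hz : T.neighborSet z = {y})
    {F : ι → V → X}
    (hinner : Function.Injective fun q : ι × (T.induce {w | w ≠ z}).edgeSet =>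
      Sym2.map (fun w : {w | w ≠ z} => F q.1 w) q.2)
    (hpendant : Function.Injective fun i => s(F i z, F i y))
    (hne : ∀ i j, ∀ e ∈ (T.induce {w | w ≠ z}).edgeSet,
      Sym2.map (fun w : {w | w ≠ z} => F i w) e ≠ s(F j z, F j y)) :
    Function.Injective fun q : ι × T.edgeSet => Sym2.map (F q.1) q.2 := by
  rintro ⟨i, e, heT⟩ ⟨j, e', heT'⟩ heq
  change Sym2.map (F i) e = Sym2.map (F j) e' at heq
  rcases (mem_edgeSet_iff_of_neighborSet_eq hz).1 heT with rfl | ⟨e, he, rfl⟩ <;>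
    rcases (mem_edgeSet_iff_of_neighborSet_eq hz).1 heT' with rfl | ⟨e', he', rfl⟩
  · obtain rfl := hpendant heq
    rfl
  · rw [Sym2.map_map] at heq
    exact (hne j i e' he' heq.symm).elim
  · rw [Sym2.map_map] at heq
    exact (hne i j e he heq).elim
  · rw [Sym2.map_map, Sym2.map_map] at heq
    obtain ⟨rfl, h⟩ := Prod.mk.inj (@hinner (i, ⟨e, he⟩) (j, ⟨e', he'⟩) heq)
    obtain rfl := congrArg Subtype.val h
    rfl

end Decomposition

/-- Representatives of the four classes, up to scalars, of nonzero linear forms on the plane over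
`ZMod 3`; two inequivalent forms are coordinates of the plane. -/
def planeForm (k : Fin 4) (α : ZMod 3 × ZMod 3) : ZMod 3 :=
  ![α.1, α.2, α.1 + α.2, α.1 + 2 * α.2] k

theorem planeForm_ext : ∀ {i j : Fin 4}, i ≠ j → ∀ {α β : ZMod 3 × ZMod 3},
    planeForm i α = planeForm i β → planeForm j α = planeForm j β → α = β := by
  decide

/-- The far end of a pendant edge selected by `s`: two of the three values of `s` give an extra
point, the third one gives `x`. -/
def pendantEnd {X : Type*} (x : X) (s : ZMod 3) : X ⊕ Bool :=
  if s = 0 then .inr false else if s = 1 then .inr true else .inl x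

theorem eq_of_pendantEnd_eq_inl {X : Type*} {x q : X} {s : ZMod 3}
    (h : pendantEnd x s = .inl q) : x = q := by
  unfold pendantEnd at h
  split_ifs at h
  exact Sum.inl.inj h

theorem eq_of_pendantEnd_eq {X : Type*} {x y : X} {s t : ZMod 3}
    (h : pendantEnd x s = pendantEnd y t) : s = t := by
  have eq_of_ne_of_ne : ∀ s t : ZMod 3, s ≠ 0 → s ≠ 1 → t ≠ 0 → t ≠ 1 → s = t := by decide
  unfold pendantEnd at h
  split_ifs at h
  all_goals first | simp_all; done | exact eq_of_ne_of_ne s t ‹_› ‹_› ‹_› ‹_›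

namespace SplitLabelling

variable {W A : Type*} [AddCommGroup A] {G : SimpleGraph W} (L : SplitLabelling G A)

/-- The copy with index `i` of the vertex `v`: its label is translated by `i.1`, and it is placed
in the fibre over that label according to the linear form of its colour. -/
def point (i : A × ZMod 3 × ZMod 3) (v : W) : A × ZMod 3 :=
  (L.label v + i.1, planeForm (L.colour (L.label v)) i.2 + L.level v)

/-- The copy with index `i` of a vertex attached to `y` by a new pendant edge. Level `2`, which
`L` leaves free, and a form `k` independent of the one at `y` keep all these edges distinct. -/
def pendant (y : W) (k : Fin 4) (i : A × ZMod 3 × ZMod 3) : A × ZMod 3 ⊕ Bool :=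
  pendantEnd (L.label y + i.1, planeForm (L.colour (L.label y)) i.2 + 2) (planeForm k i.2)

theorem point_injective (i : A × ZMod 3 × ZMod 3) : Function.Injective (L.point i) := by
  intro u v h
  obtain ⟨hlabel, hlevel⟩ := Prod.ext_iff.1 h
  have hlabel' := add_right_cancel hlabel
  simp only [point, hlabel', add_right_inj] at hlevel
  exact L.injective (Prod.ext hlabel' hlevel)

theorem label_ne {u v : W} (huv : G.Adj u v) : L.label u ≠ L.label v :=
  fun h => L.colour_ne u v huv (congrArg L.colour h)

theorem injective_sym2Map_point :
    Function.Injective fun q : (A × ZMod 3 × ZMod 3) × G.edgeSet =>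
      Sym2.map (L.point q.1) q.2 := by
  refine injective_sym2Map_of_forall_adj fun i j u v u' v' huv huv' hu hv => ?_
  obtain ⟨hu₁, hu₂⟩ := Prod.ext_iff.1 hu
  obtain ⟨hv₁, hv₂⟩ := Prod.ext_iff.1 hv
  have hdiff : dartDiff L.label (u, v) = dartDiff L.label (u', v') := by
    rw [dartDiff, ← add_sub_add_right_eq_sub _ _ i.1]
    exact (congrArg₂ (· - ·) hu₁ hv₁).trans (add_sub_add_right_eq_sub _ _ j.1)
  obtain ⟨rfl, rfl⟩ := Prod.ext_iff.1 (L.rainbow huv huv' hdiff)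
  exact ⟨Prod.ext (add_left_cancel hu₁) (planeForm_ext (L.colour_ne u v huv)
    (add_right_cancel hu₂) (add_right_cancel hv₂)), rfl, rfl⟩

theorem pendant_ne_point (y : W) (k : Fin 4) (i : A × ZMod 3 × ZMod 3) (v : W) :
    L.pendant y k i ≠ .inl (L.point i v) := by
  intro h
  obtain ⟨hlabel, hlevel⟩ := Prod.ext_iff.1 (eq_of_pendantEnd_eq_inl h)
  simp only [point, add_right_cancel hlabel, add_right_inj] at hlevel
  exact L.level_ne_two v hlevel.symm

theorem injective_pendant_edge {y : W} {k : Fin 4} (hk : k ≠ L.colour (L.label y)) :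
    Function.Injective fun i => s(L.pendant y k i, .inl (L.point i y)) := by
  intro i j h
  rcases Sym2.eq_iff.1 h with ⟨hz, hy⟩ | ⟨hz, hy⟩
  · obtain ⟨hy₁, hy₂⟩ := Prod.ext_iff.1 (Sum.inl.inj hy)
    exact Prod.ext (add_left_cancel hy₁)
      (planeForm_ext hk (eq_of_pendantEnd_eq hz) (add_right_cancel hy₂))
  · have not_swapped : ∀ r s t : ZMod 3, r + 2 = s + t → r + t = s + 2 → t = 2 := by decide
    have hz₂ := congrArg Prod.snd (eq_of_pendantEnd_eq_inl hz)
    have hy₂ := congrArg Prod.snd (eq_of_pendantEnd_eq_inl hy.symm)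
    exact (L.level_ne_two y (not_swapped _ _ _ hz₂ hy₂.symm)).elim

theorem sym2Map_point_ne_pendant_edge (y : W) (k : Fin 4) (i j : A × ZMod 3 × ZMod 3)
    {e : Sym2 W} (he : e ∈ G.edgeSet) :
    Sym2.map (fun v => .inl (L.point i v)) e ≠ s(L.pendant y k j, .inl (L.point j y)) := by
  obtain ⟨u, v⟩ := e
  have label_eq : ∀ {u v : W}, .inl (L.point i u) = L.pendant y k j →
      (.inl (L.point i v) : A × ZMod 3 ⊕ Bool) = .inl (L.point j y) → L.label u = L.label v :=
    fun hu hv => add_right_cancel <|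
      (congrArg Prod.fst (eq_of_pendantEnd_eq_inl hu.symm)).symm.trans
        (congrArg Prod.fst (Sum.inl.inj hv)).symm
  intro h
  rcases Sym2.eq_iff.1 h with ⟨hu, hv⟩ | ⟨hu, hv⟩
  · exact L.label_ne he (label_eq hu hv)
  · exact L.label_ne (G.adj_symm he) (label_eq hv hu)

end SplitLabelling

section Main

variable {V : Type*} {T : SimpleGraph V} {z : V}

theorem SplitLabelling.exists_copies {A : Type*} [AddCommGroup A]
    (L : SplitLabelling (T.induce {w | w ≠ z}) A) (hz : (T.neighborSet z).ncard = 1) :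
    ∃ F : A × ZMod 3 × ZMod 3 → V → A × ZMod 3 ⊕ Bool, (∀ i, Function.Injective (F i)) ∧
      (∀ i, ∀ v ≠ z, ∃ x, F i v = .inl x) ∧
      Function.Injective fun q : (A × ZMod 3 × ZMod 3) × T.edgeSet => Sym2.map (F q.1) q.2 := by
  classical
  obtain ⟨y, hy⟩ := Set.ncard_eq_one.1 hz
  have hyz : y ≠ z := (show T.Adj z y from hy.ge (Set.mem_singleton y)).ne'
  obtain ⟨k, hk⟩ := exists_ne (L.colour (L.label ⟨y, hyz⟩))
  let F : A × ZMod 3 × ZMod 3 → V → A × ZMod 3 ⊕ Bool := fun i v =>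
    if h : v = z then L.pendant ⟨y, hyz⟩ k i else .inl (L.point i ⟨v, h⟩)
  have hFz : ∀ i, F i z = L.pendant ⟨y, hyz⟩ k i := fun i => dif_pos rfl
  have hFv : ∀ i v (h : v ≠ z), F i v = .inl (L.point i ⟨v, h⟩) := fun i v h => dif_neg h
  have hF : ∀ i, (fun w : {w | w ≠ z} => F i w) = fun w => .inl (L.point i w) :=
    fun i => funext fun w => hFv i w w.2
  refine ⟨F, fun i u v huv => ?_, fun i v hv => ⟨_, hFv i v hv⟩,
    injective_sym2Map_of_neighborSet_eq hy ?_ ?_ fun i j e he => ?_⟩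
  · by_cases hu : u = z <;> by_cases hv : v = z
    · rw [hu, hv]
    · rw [hu, hFz, hFv i v hv] at huv
      exact (L.pendant_ne_point _ _ _ _ huv).elim
    · rw [hv, hFz, hFv i u hu] at huv
      exact (L.pendant_ne_point _ _ _ _ huv.symm).elim
    · rw [hFv i u hu, hFv i v hv] at huv
      exact congrArg Subtype.val (L.point_injective i (Sum.inl.inj huv))
  · simp only [hF, ← Function.comp_def Sum.inl, ← Sym2.map_map]
    exact (Sym2.map.injective Sum.inl_injective).comp L.injective_sym2Map_point
  · simp only [hFz, hFv _ y hyz]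
    exact L.injective_pendant_edge hk
  · rw [hF, hFz, hFv j y hyz]
    exact L.sym2Map_point_ne_pendant_edge _ _ _ _ he

theorem SplitLabelling.decomposes_top_deleteEdges {V A X : Type} {T : SimpleGraph V} {z : V}
    [Finite V] [AddCommGroup A] [Finite A] (L : SplitLabelling (T.induce {w | w ≠ z}) A)
    (hz : (T.neighborSet z).ncard = 1) (hT : 2 * T.edgeSet.ncard = Nat.card A + 1)
    (hX : Nat.card X = 3 * Nat.card A + 2) {a b : X} (hab : a ≠ b) :
    Decomposes T ((⊤ : SimpleGraph X).deleteEdges {s(a, b)}) := by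
  obtain ⟨F, hinj, hinl, hedge⟩ := L.exists_copies hz
  have : Finite X := Nat.finite_of_card_ne_zero (by lia)
  have hcardX : Nat.card (A × ZMod 3 ⊕ Bool) = Nat.card X := by
    rw [Nat.card_sum, Nat.card_prod, Nat.card_zmod, Nat.card_eq_fintype_card (α := Bool),
      Fintype.card_bool, hX, mul_comm]
  obtain ⟨φ, hφa, hφb⟩ := exists_equiv_apply_eq_apply_eq
    ((Finite.card_eq.1 hcardX).some) (Sum.inr_injective.ne Bool.false_ne_true) hab
  have hinr : ∀ i v c, φ (F i v) = φ (.inr c) → v = z := fun i v c h => by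
    by_contra hv
    obtain ⟨x, hx⟩ := hinl i v hv
    exact Sum.inl_ne_inr (hx.symm.trans (φ.injective h))
  refine Decomposes.of_injective_of_card (f := fun i v => φ (F i v))
    (fun i => φ.injective.comp (hinj i)) (fun i u v huv => ?_) ?_ ?_
  · refine (SimpleGraph.deleteEdges_adj).2 ⟨φ.injective.ne ((hinj i).ne huv.ne), fun h => huv.ne ?_⟩
    rw [Set.mem_singleton_iff, Sym2.eq_iff, ← hφa, ← hφb] at h
    rcases h with ⟨hu, hv⟩ | ⟨hu, hv⟩ <;> rw [hinr i u _ hu, hinr i v _ hv]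
  · simp only [← Function.comp_def φ, ← Sym2.map_map]
    exact (Sym2.map.injective φ.injective).comp hedge
  · have hchoose : (3 * Nat.card A + 2).choose 2 = Nat.card A * 9 * T.edgeSet.ncard + 1 := by
      rw [Nat.choose_two_right]
      refine Nat.div_eq_of_eq_mul_left two_pos ?_
      rw [show 3 * Nat.card A + 2 - 1 = 3 * Nat.card A + 1 by lia]
      linear_combination 9 * Nat.card A * hT.symm
    have htop := ncard_edgeSet_top_deleteEdges hab
    rw [hX, hchoose] at htop
    rw [Nat.card_prod, Nat.card_prod, Nat.card_zmod]
    exact Nat.add_right_cancel htop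

theorem isTree_induce_ne [Finite V] (hT : T.IsTree) (hz : (T.neighborSet z).ncard = 1) :
    (T.induce {w | w ≠ z}).IsTree := by
  classical
  have := Fintype.ofFinite V
  refine ⟨hT.connected.induce_compl_singleton_of_degree_eq_one ?_, hT.isAcyclic.induce _⟩
  rw [← SimpleGraph.card_neighborFinset_eq_degree, ← Set.ncard_coe_finset,
    SimpleGraph.coe_neighborFinset, hz]

theorem tree_decomposes_complete_minus_edge_general {V X : Type} [Finite V] {m : ℕ}
    (hp : (2 * m + 1).Prime) {T : SimpleGraph V} (hT : T.IsTree)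
    (hedges : T.edgeSet.ncard = m + 1) {z : V} (hz : (T.neighborSet z).ncard = 1)
    (hleaves : m ≤ 3 * {v : {w : V // w ≠ z} |
      ((T.induce {w : V | w ≠ z}).neighborSet v).ncard = 1}.ncard + 1)
    (hX : Nat.card X = 6 * m + 5) {a b : X} (hab : a ≠ b) :
    Decomposes T ((⊤ : SimpleGraph X).deleteEdges {s(a, b)}) := by
  classical
  have := Fintype.ofFinite V
  have hcardV : Fintype.card V = m + 2 := by
    rw [← hT.card_edgeFinset, ← Set.ncard_coe_finset, SimpleGraph.coe_edgeFinset, hedges]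
  have hcard : Fintype.card {w | w ≠ z} = m + 1 := by
    rw [Set.card_ne_eq z, hcardV]
    rfl
  obtain ⟨L⟩ := exists_splitLabelling hp (isTree_induce_ne hT hz) hcard hleaves
  exact L.decomposes_top_deleteEdges hz (by rw [hedges, Nat.card_zmod]; lia)
    (by rw [hX, Nat.card_zmod]; lia) hab

end Main

/-- Let `p = 2m+1 > 10` be a prime and let `T` be a tree with `m+1` edges having a leaf `z`
such that the tree `T − z` has at least `2m/5` leaves. Then `T` decomposes `K_{6m+5} \ e`,
the complete graph on `6m+5` vertices minus one edge. -/
theorem tree_decomposes_complete_minus_edge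
    (p m : ℕ) (hp : p.Prime) (hpm : p = 2 * m + 1) (hp10 : 10 < p)
    {V : Type} [Fintype V] (T : SimpleGraph V) (hT : T.IsTree)
    (hedges : T.edgeSet.ncard = m + 1)
    (z : V) (hz : (T.neighborSet z).ncard = 1)
    (hleaves : 2 * m ≤ 5 *
      {v : {w : V // w ≠ z} |
        ((T.induce {w : V | w ≠ z}).neighborSet v).ncard = 1}.ncard)
    (a b : Fin (6 * m + 5)) (hab : a ≠ b) :
    Decomposes T ((⊤ : SimpleGraph (Fin (6 * m + 5))).deleteEdges {s(a, b)}) :=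
  tree_decomposes_complete_minus_edge_general (hpm ▸ hp) hT hedges hz (by omega) (by simp) hab
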